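/- Let p be a prime, and let α_1,…,α_n be positive integers with r = α_1+⋯+α_n ≤ p-3. For any positive integer b, define U_{bp}(α_1,…,α_n) = Σ 1/(l_1^{α_1}⋯l_n^{α_n}), the sum over n-tuples of pairwise distinct positive integers l_i < bp each coprime to p. Then U_{bp}(α_1,…,α_n) ≡ (-1)^n (n-1)!·(b²r(r+1)/(2(r+2)))·B_{p-r-2}·p² (mod p³) if r is odd, and ≡ (-1)^{n-1}(n-1)!·(br/(r+1))·B_{p-r-1}·p (mod p²) if r is even. -/

import Mathlib

/-- `x ≡ y (mod p^r)` as p-integral rationals. -/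
def ratCong (p r : ℕ) (x y : ℚ) : Prop :=
  ∃ z : ℚ, x - y = (p : ℚ) ^ r * z ∧ ¬ (p ∣ z.den)

/-- `U_{bp}(α₁,…,αₙ)`: sum over pairwise distinct positive `lᵢ < b·p` coprime to `p`. -/
def U (p b : ℕ) {n : ℕ} (α : Fin n → ℕ) : ℚ :=
  ∑ l ∈ (Fintype.piFinset fun _ : Fin n => Finset.Ico 1 (b * p)) |>.filter
      (fun l => Function.Injective l ∧ ∀ i, ¬ p ∣ l i),
    ∏ i, (1 : ℚ) / (l i : ℚ) ^ (α i)

/-!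
Let `N = bp` and `H(r) = ∑ l^(-r)` over the `l < N` prime to `p`. Since `x = l^(p-1)` is `1` mod
`p`, first-order expansion in `x - 1` gives `(r + 1) l^(-r) - r l^(p-1-r) ≡ l^(p(p-1-r))` mod `p^2`.
The right-hand side is a power of the Teichmüller character, which sums to zero over the residues,
while Faulhaber's formula evaluates the sum of `l^(p-1-r)` as `N B_{p-1-r}`; this is the case
`n = 1`, `r` even. For odd `r`, pairing `l` with `N - l` expresses `H(r)` mod `p^3` through
`H(r + 1)` mod `p^2`.

For several exponents, split a product of a sum over distinct indices with a power sum according to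
whether the new index is new or equals one of the old ones. The products vanish to the required
order, so by induction `U(α) ≡ (-1)^(n-1) (n-1)! H(r)`, where `r` is the sum of the exponents.
-/

open Finset

section PadicFiltration

variable {p : ℕ} [Fact p.Prime]

/-- The ring `ℤ_(p)` of `p`-integral rationals. -/
abbrev pIntegers (p : ℕ) [Fact p.Prime] : Subring ℚ := (Rat.padicValuation p).integer

/-- The ideal `p^k ℤ_(p)` of `ℤ_(p)`, as an additive subgroup of `ℚ`; congruences mod `p^k` are
expressed as memberships of differences. -/
def padicIdeal (p : ℕ) [Fact p.Prime] (k : ℕ) : AddSubgroup ℚ where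
  carrier := {x | Rat.padicValuation p x ≤ WithZero.exp (-(k : ℤ))}
  add_mem' := (Rat.padicValuation p).map_add_le
  zero_mem' := by simp
  neg_mem' := by simp

theorem mem_padicIdeal {k : ℕ} {x : ℚ} :
    x ∈ padicIdeal p k ↔ Rat.padicValuation p x ≤ WithZero.exp (-(k : ℤ)) :=
  Iff.rfl

theorem padicIdeal_antitone : Antitone (padicIdeal p) := fun _ _ hjk _ hx ↦
  mem_padicIdeal.2 <| (mem_padicIdeal.1 hx).trans <| WithZero.exp_le_exp.2 <| by omega

theorem mul_mem_padicIdeal_add {j k : ℕ} {x y : ℚ} (hx : x ∈ padicIdeal p j)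
    (hy : y ∈ padicIdeal p k) : x * y ∈ padicIdeal p (j + k) := by
  rw [mem_padicIdeal, map_mul, Nat.cast_add, neg_add, WithZero.exp_add]
  exact mul_le_mul' hx hy

theorem mul_mem_padicIdeal {k : ℕ} {a x : ℚ} (ha : a ∈ pIntegers p) (hx : x ∈ padicIdeal p k) :
    a * x ∈ padicIdeal p k := by
  have ha0 : a ∈ padicIdeal p 0 := by simpa [mem_padicIdeal, Valuation.mem_integer_iff] using ha
  simpa using mul_mem_padicIdeal_add ha0 hx

theorem pow_mem_padicIdeal {k : ℕ} {x : ℚ} (hx : x ∈ padicIdeal p k) (n : ℕ) :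
    x ^ n ∈ padicIdeal p (n * k) := by
  induction n with
  | zero => simp [mem_padicIdeal]
  | succ n ih => simpa only [pow_succ, Nat.succ_mul] using mul_mem_padicIdeal_add ih hx

theorem prime_mem_padicIdeal : (p : ℚ) ∈ padicIdeal p 1 := by
  simp [mem_padicIdeal]

theorem intCast_mem_padicIdeal_of_dvd {k : ℕ} {x : ℤ} (h : (p : ℤ) ^ k ∣ x) :
    (x : ℚ) ∈ padicIdeal p k := by
  obtain ⟨c, rfl⟩ := h
  rw [Int.cast_mul, mul_comm]
  refine mul_mem_padicIdeal (intCast_mem _ c) ?_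
  simpa using pow_mem_padicIdeal prime_mem_padicIdeal k

theorem natCast_mem_padicIdeal_one {n : ℕ} (h : p ∣ n) : (n : ℚ) ∈ padicIdeal p 1 := by
  exact_mod_cast intCast_mem_padicIdeal_of_dvd (k := 1) (x := n) (by simpa using mod_cast h)

theorem inv_natCast_mem_pIntegers {l : ℕ} (hl : ¬ p ∣ l) : (l : ℚ)⁻¹ ∈ pIntegers p := by
  have hv : Rat.padicValuation p ((l : ℤ) : ℚ) = 1 := by
    rw [Rat.padicValuation_cast, Int.padicValuation_eq_one_iff]
    exact_mod_cast hl
  rw [Valuation.mem_integer_iff, map_inv₀, ← Int.cast_natCast, hv, inv_one]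

omit [Fact p.Prime] in
theorem natCast_ne_zero_of_not_dvd {l : ℕ} (hl : ¬ p ∣ l) : (l : ℚ) ≠ 0 :=
  Nat.cast_ne_zero.2 fun h ↦ hl (h ▸ dvd_zero p)

theorem mem_padicIdeal_of_natCast_mul_mem {k l : ℕ} (hl : ¬ p ∣ l) {x : ℚ}
    (h : l * x ∈ padicIdeal p k) : x ∈ padicIdeal p k := by
  simpa [natCast_ne_zero_of_not_dvd hl] using
    mul_mem_padicIdeal (inv_natCast_mem_pIntegers hl) h

theorem ratCong_iff_sub_mem_padicIdeal {k : ℕ} {x y : ℚ} :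
    ratCong p k x y ↔ x - y ∈ padicIdeal p k := by
  have hp : (p : ℚ) ^ k ≠ 0 := pow_ne_zero _ (Nat.cast_ne_zero.2 (Fact.out : p.Prime).ne_zero)
  constructor
  · rintro ⟨z, hz, hden⟩
    rw [hz, mul_comm]
    exact mul_mem_padicIdeal (Rat.padicValuation_le_one_iff.2 hden)
      (by simpa using pow_mem_padicIdeal prime_mem_padicIdeal k)
  · intro h
    refine ⟨(x - y) / p ^ k, (mul_div_cancel₀ _ hp).symm, Rat.padicValuation_le_one_iff.1 ?_⟩
    rw [map_div₀, map_pow, Rat.padicValuation_self, ← WithZero.exp_nsmul]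
    exact div_le_one_of_le₀ (by simpa using mem_padicIdeal.1 h) zero_le

/-- The binomial series of `(1 - x)^(-r)`, truncated after the quadratic term. -/
theorem two_mul_pow_sub_mem_padicIdeal {k : ℕ} {x y : ℚ} (hx : x ∈ padicIdeal p k)
    (hy : y ∈ pIntegers p) (hxy : y * (1 - x) = 1) (r : ℕ) :
    2 * y ^ r - (2 + 2 * r * x + r * (r + 1) * x ^ 2) ∈ padicIdeal p (3 * k) := by
  induction r with
  | zero => simp
  | succ r ih =>
    have hcube : ((r + 1) * (r + 2) : ℕ) * x ^ 3 ∈ padicIdeal p (3 * k) :=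
      mul_mem_padicIdeal (natCast_mem _ _) (pow_mem_padicIdeal hx 3)
    convert mul_mem_padicIdeal hy (add_mem ih hcube) using 1
    push_cast
    linear_combination
      (2 + 2 * (r + 1 : ℚ) * x + (r + 1) * (r + 2) * x ^ 2) * hxy

end PadicFiltration

section Bernoulli

variable {p : ℕ} [Fact p.Prime]

theorem bernoulli_mem_pIntegers {n : ℕ} (hn : ¬ p - 1 ∣ n) : bernoulli n ∈ pIntegers p := by
  have hp : p.Prime := Fact.out
  obtain ⟨k, rfl | rfl⟩ := n.even_or_odd'
  · obtain ⟨z, hz⟩ := Bernoulli.vonStaudt_clausen k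
    rw [eq_sub_of_add_eq hz.symm]
    refine sub_mem (intCast_mem _ z) (sum_mem fun q hq ↦ ?_)
    obtain ⟨-, hq, hqk⟩ := mem_filter.1 hq
    rw [one_div]
    refine inv_natCast_mem_pIntegers fun hpq ↦ hn ?_
    rwa [(Nat.prime_dvd_prime_iff_eq hp hq).1 hpq]
  · rcases k.eq_zero_or_pos with rfl | hk
    · have h2 : ¬ p ∣ 2 := fun h ↦ hn <| by
        simp [(Nat.prime_dvd_prime_iff_eq hp Nat.prime_two).1 h]
      simpa [neg_div] using neg_mem (inv_natCast_mem_pIntegers h2)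
    · simp [bernoulli_eq_zero_of_odd ⟨k, rfl⟩ (by omega)]

theorem bernoulli_mem_pIntegers_of_lt {n : ℕ} (hn : n < p - 1) : bernoulli n ∈ pIntegers p := by
  rcases n.eq_zero_or_pos with rfl | hpos
  · simp
  · exact bernoulli_mem_pIntegers (Nat.not_dvd_of_pos_of_lt hpos hn)

theorem sum_range_pow_sub_mul_bernoulli_mem {N k m : ℕ} (hN : (N : ℚ) ∈ padicIdeal p k)
    (hm : m < p - 1) :
    ∑ l ∈ range N, (l : ℚ) ^ m - N * bernoulli m ∈ padicIdeal p (2 * k) := by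
  have hm0 : (m : ℚ) + 1 ≠ 0 := by positivity
  have htop : bernoulli m * (m + 1).choose m * (N : ℚ) ^ (m + 1 - m) / (m + 1)
      = N * bernoulli m := by
    rw [Nat.choose_succ_self_right, Nat.add_sub_cancel_left]
    push_cast
    field_simp
  rw [sum_range_pow, sum_range_succ, htop, add_sub_cancel_right]
  refine sum_mem fun j hj ↦ ?_
  obtain ⟨i, hi⟩ : ∃ i, m + 1 - j = i + 2 := ⟨m - 1 - j, by grind⟩
  have hinv : ((m + 1 : ℕ) : ℚ)⁻¹ ∈ pIntegers p :=
    inv_natCast_mem_pIntegers (Nat.not_dvd_of_pos_of_lt m.succ_pos (by omega))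
  have hB : bernoulli j ∈ pIntegers p := bernoulli_mem_pIntegers_of_lt (by grind)
  have hcoeff : bernoulli j * (m + 1).choose j * N ^ i * ((m + 1 : ℕ) : ℚ)⁻¹ ∈ pIntegers p :=
    mul_mem (mul_mem (mul_mem hB (natCast_mem _ _)) (pow_mem (natCast_mem _ _) i)) hinv
  convert mul_mem_padicIdeal hcoeff (pow_mem_padicIdeal hN 2) using 1
  rw [hi]
  push_cast
  ring

end Bernoulli

section Teichmuller

variable {p : ℕ} [Fact p.Prime]

theorem natCast_pow_prime_pow_eq {x y : ℕ} (h : (x : ZMod p) = y) (k : ℕ) :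
    (x : ZMod (p ^ (k + 1))) ^ p ^ k = (y : ZMod (p ^ (k + 1))) ^ p ^ k := by
  have hxy : (p : ℤ) ∣ x - y := by
    rw [← ZMod.intCast_zmod_eq_zero_iff_dvd]
    simp [h]
  have := dvd_sub_pow_of_dvd_sub hxy k
  rw [← sub_eq_zero]
  exact_mod_cast (ZMod.intCast_zmod_eq_zero_iff_dvd _ _).2 (by exact_mod_cast this)

/-- The Teichmüller character modulo `p^(k+1)`, sending the class of `l` to `l^(p^k)`. -/
def teichmuller (p k : ℕ) [Fact p.Prime] : ZMod p →* ZMod (p ^ (k + 1)) where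
  toFun x := (x.val : ZMod (p ^ (k + 1))) ^ p ^ k
  map_one' := by simp [ZMod.val_one]
  map_mul' x y := by
    rw [← mul_pow, ← Nat.cast_mul]
    exact natCast_pow_prime_pow_eq (by simp) k

theorem teichmuller_natCast (k l : ℕ) :
    teichmuller p k (l : ZMod p) = (l : ZMod (p ^ (k + 1))) ^ p ^ k :=
  natCast_pow_prime_pow_eq (by simp) k

theorem castHom_teichmuller (k : ℕ) (x : ZMod p) :
    ZMod.castHom (dvd_pow_self p k.succ_ne_zero) (ZMod p) (teichmuller p k x) = x := by
  rw [← ZMod.natCast_zmod_val x, teichmuller_natCast, map_pow, map_natCast, ZMod.pow_card_pow]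

theorem isUnit_of_castHom_ne_zero {k : ℕ} {z : ZMod (p ^ (k + 1))}
    (hz : ZMod.castHom (dvd_pow_self p k.succ_ne_zero) (ZMod p) z ≠ 0) : IsUnit z := by
  rw [← ZMod.natCast_zmod_val z, map_natCast, Ne, ZMod.natCast_eq_zero_iff] at hz
  rw [← ZMod.natCast_zmod_val z, ZMod.isUnit_iff_coprime]
  exact (((Fact.out : p.Prime).coprime_iff_not_dvd.2 hz).pow_left _).symm

theorem sum_teichmuller_pow_eq_zero {m : ℕ} (hm : ¬ p - 1 ∣ m) (k : ℕ) :
    ∑ x, teichmuller p k x ^ m = 0 := by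
  obtain ⟨a, ha⟩ : ∃ a : (ZMod p)ˣ, a ^ m ≠ 1 := by
    by_contra! h
    exact hm (by simpa using (FiniteField.forall_pow_eq_one_iff (ZMod p) m).1 h)
  have hunit : IsUnit (teichmuller p k a ^ m - 1) := by
    refine isUnit_of_castHom_ne_zero ?_
    rw [map_sub, map_pow, castHom_teichmuller, map_one, sub_ne_zero]
    simpa [Units.ext_iff] using ha
  have hinvariant : teichmuller p k a ^ m * ∑ x, teichmuller p k x ^ m
      = ∑ x, teichmuller p k x ^ m := by
    simp only [mul_sum, ← mul_pow, ← map_mul]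
    exact Equiv.sum_comp a.mulLeft fun x ↦ teichmuller p k x ^ m
  refine hunit.mul_right_eq_zero.1 ?_
  rw [sub_mul, one_mul, hinvariant, sub_self]

theorem sum_range_natCast_zmod {M : Type*} [AddCommMonoid M] (n b : ℕ) [NeZero n]
    (g : ZMod n → M) : ∑ l ∈ range (b * n), g l = b • ∑ x, g x := by
  have hperiod : ∑ l ∈ range n, g l = ∑ x, g x := by
    refine sum_nbij' (fun l ↦ (l : ZMod n)) ZMod.val ?_ ?_ ?_ ?_ ?_ <;>
      simp +contextual [ZMod.val_lt, Nat.mod_eq_of_lt]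
  induction b with
  | zero => simp
  | succ b ih => simp [add_mul, sum_range_add, ih, hperiod, add_smul]

theorem pow_dvd_sum_range_pow {N m : ℕ} (hN : p ∣ N) (hm : ¬ p - 1 ∣ m) (k : ℕ) :
    (p : ℤ) ^ (k + 1) ∣ ∑ l ∈ range N, (l : ℤ) ^ (p ^ k * m) := by
  obtain ⟨b, rfl⟩ := exists_eq_mul_left_of_dvd hN
  have h := sum_range_natCast_zmod p b fun x ↦ teichmuller p k x ^ m
  simp only [sum_teichmuller_pow_eq_zero hm, smul_zero, teichmuller_natCast, ← pow_mul] at h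
  rw [← Nat.cast_pow, ← ZMod.intCast_zmod_eq_zero_iff_dvd]
  exact_mod_cast h

end Teichmuller

section HarmonicSum

/-- The positive integers below `N` that are not divisible by `p`. -/
def nonMultiples (p N : ℕ) : Finset ℕ := {l ∈ range N | ¬ p ∣ l}

theorem mem_nonMultiples {p N l : ℕ} : l ∈ nonMultiples p N ↔ l < N ∧ ¬ p ∣ l := by
  simp [nonMultiples]

/-- The power sum of the reciprocals of the integers below `N` that are prime to `p`; this is
`U_N(r)` in the notation of multiple sums. -/
def harmonicSum (p N r : ℕ) : ℚ := ∑ l ∈ nonMultiples p N, (l : ℚ)⁻¹ ^ r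

theorem sum_nonMultiples_reflect {M : Type*} [AddCommMonoid M] {p N : ℕ} (hN : p ∣ N)
    (f : ℕ → M) : ∑ l ∈ nonMultiples p N, f (N - l) = ∑ l ∈ nonMultiples p N, f l := by
  have hmem : ∀ l ∈ nonMultiples p N, N - l ∈ nonMultiples p N := by
    simp only [mem_nonMultiples]
    rintro l ⟨hlN, hpl⟩
    have hl : l ≠ 0 := fun h ↦ hpl (h ▸ dvd_zero p)
    exact ⟨by omega, mt (Nat.dvd_sub_iff_right hlN.le hN).1 hpl⟩
  have hinv : ∀ l ∈ nonMultiples p N, N - (N - l) = l := fun l hl ↦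
    Nat.sub_sub_self (mem_nonMultiples.1 hl).1.le
  exact sum_nbij' (N - ·) (N - ·) hmem hmem hinv hinv fun _ _ ↦ rfl

/-- Both `r + 1 - r x` and `x^(p-r)` agree with `x^(-r)` to first order in `x - 1`. -/
theorem sq_dvd_linear_sub_pow {p r : ℕ} (hr : r ≤ p) {x : ℤ} (hx : (p : ℤ) ∣ x - 1) :
    (p : ℤ) ^ 2 ∣ r + 1 - r * x - x ^ (p - r) := by
  obtain ⟨t, ht⟩ := hx
  obtain rfl : x = 1 + p * t := by linarith
  obtain ⟨c, hc⟩ := Polynomial.powAddExpansion 1 (p * t) (p - r)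
  refine ⟨-t - c * t ^ 2, ?_⟩
  rw [hc]
  push_cast [hr]
  ring

variable {p N r : ℕ} [Fact p.Prime]

theorem harmonicSum_mem_pIntegers : harmonicSum p N r ∈ pIntegers p :=
  sum_mem fun _ hl ↦ pow_mem (inv_natCast_mem_pIntegers (mem_nonMultiples.1 hl).2) r

theorem sum_range_pow_sub_sum_nonMultiples_mem (N m : ℕ) :
    ∑ l ∈ range N, (l : ℚ) ^ m - ∑ l ∈ nonMultiples p N, (l : ℚ) ^ m ∈ padicIdeal p m := by
  rw [nonMultiples, ← sum_filter_not_add_sum_filter (range N) (¬ p ∣ ·), add_sub_cancel_right]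
  refine sum_mem fun l hl ↦ ?_
  have hpl : p ∣ l := not_not.1 (mem_filter.1 hl).2
  simpa using pow_mem_padicIdeal (natCast_mem_padicIdeal_one hpl) m

/-- With `x = l^(p-1) ≡ 1 (mod p)`, the three terms are `l^(-r)` times `r + 1`, `r x` and
`x^(p-r)`. -/
theorem inv_pow_sub_pow_sub_pow_mem {l : ℕ} (hr : r < p) (hl : ¬ p ∣ l) :
    (r + 1) * (l : ℚ)⁻¹ ^ r - r * (l : ℚ) ^ (p - 1 - r) - (l : ℚ) ^ (p * (p - 1 - r))
      ∈ padicIdeal p 2 := by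
  have hp : p.Prime := Fact.out
  have hl0 := natCast_ne_zero_of_not_dvd hl
  have hfermat : (p : ℤ) ∣ (l : ℤ) ^ (p - 1) - 1 :=
    (Int.ModEq.pow_card_sub_one_eq_one hp
      (Nat.isCoprime_iff_coprime.2 (hp.coprime_iff_not_dvd.2 hl).symm)).symm.dvd
  have hexp : (l : ℚ)⁻¹ ^ r * (l : ℚ) ^ ((p - 1) * (p - r)) = (l : ℚ) ^ (p * (p - 1 - r)) := by
    have : (p - 1) * (p - r) = r + p * (p - 1 - r) := by
      obtain ⟨d, rfl⟩ := Nat.exists_eq_add_of_lt hr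
      simp only [show r + d + 1 - r = d + 1 by omega, Nat.add_sub_cancel, Nat.add_sub_cancel_left]
      ring
    rw [this, pow_add, ← mul_assoc, ← mul_pow, inv_mul_cancel₀ hl0, one_pow, one_mul]
  have hexp' : (l : ℚ)⁻¹ ^ r * (l : ℚ) ^ (p - 1) = (l : ℚ) ^ (p - 1 - r) := by
    rw [inv_pow, mul_comm, ← pow_sub₀ _ hl0 (by omega)]
  convert mul_mem_padicIdeal (pow_mem (inv_natCast_mem_pIntegers hl) r)
    (intCast_mem_padicIdeal_of_dvd (sq_dvd_linear_sub_pow hr.le hfermat)) using 1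
  rw [← hexp, ← hexp', pow_mul]
  push_cast
  ring

theorem harmonicSum_sub_mem_padicIdeal_two (hN : p ∣ N) (hr0 : 1 ≤ r) (hr : r + 3 ≤ p) :
    harmonicSum p N r - N * r / (r + 1) * bernoulli (p - r - 1) ∈ padicIdeal p 2 := by
  have hpr : ¬ p ∣ r + 1 := Nat.not_dvd_of_pos_of_lt r.succ_pos (by omega)
  have hm : ¬ p - 1 ∣ p - 1 - r := Nat.not_dvd_of_pos_of_lt (by omega) (by omega)
  refine mem_padicIdeal_of_natCast_mul_mem hpr ?_
  have hpointwise := sum_mem fun l hl ↦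
    inv_pow_sub_pow_sub_pow_mem (r := r) (by omega) (mem_nonMultiples (p := p) (N := N).1 hl).2
  have hteich : (∑ l ∈ range N, (l : ℚ) ^ (p * (p - 1 - r))) ∈ padicIdeal p 2 := by
    simpa using intCast_mem_padicIdeal_of_dvd (pow_dvd_sum_range_pow hN hm 1)
  have hfaulhaber := sum_range_pow_sub_mul_bernoulli_mem (natCast_mem_padicIdeal_one hN)
    (m := p - 1 - r) (by omega)
  have hrange := padicIdeal_antitone (by omega : 2 ≤ p - 1 - r)
    (sum_range_pow_sub_sum_nonMultiples_mem (p := p) N (p - 1 - r))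
  have hrange' := padicIdeal_antitone
    ((by omega : 2 ≤ p - 1 - r).trans (Nat.le_mul_of_pos_left _ (Fact.out : p.Prime).pos))
    (sum_range_pow_sub_sum_nonMultiples_mem (p := p) N (p * (p - 1 - r)))
  have hlow := mul_mem_padicIdeal (natCast_mem _ r) (sub_mem hfaulhaber hrange)
  convert add_mem hpointwise (add_mem hlow (sub_mem hteich hrange')) using 1
  have hr1 : (r : ℚ) + 1 ≠ 0 := by positivity
  rw [sum_sub_distrib, sum_sub_distrib, ← mul_sum, ← mul_sum, ← harmonicSum,
    Nat.sub_right_comm p r 1]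
  push_cast
  field_simp
  ring

/-- Pairing `l` with `N - l`. -/
theorem reflection_mem_padicIdeal_three (hN : p ∣ N) (hr : Odd r) :
    2 * (2 * harmonicSum p N r) + 2 * r * N * harmonicSum p N (r + 1)
      + r * (r + 1) * N ^ 2 * harmonicSum p N (r + 2) ∈ padicIdeal p 3 := by
  have hpair : ∀ l ∈ nonMultiples p N, 2 * ((N - l : ℕ) : ℚ)⁻¹ ^ r + (2 * (l : ℚ)⁻¹ ^ r
      + 2 * r * N * (l : ℚ)⁻¹ ^ (r + 1) + r * (r + 1) * N ^ 2 * (l : ℚ)⁻¹ ^ (r + 2))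
      ∈ padicIdeal p 3 := fun l hl ↦ by
    obtain ⟨hlN, hpl⟩ := mem_nonMultiples.1 hl
    have hpl' : ¬ p ∣ N - l := mt (Nat.dvd_sub_iff_right hlN.le hN).1 hpl
    have hl0 := natCast_ne_zero_of_not_dvd hpl
    have hl0' := natCast_ne_zero_of_not_dvd hpl'
    have hu := inv_natCast_mem_pIntegers hpl
    have hv := inv_natCast_mem_pIntegers hpl'
    have hseries := two_mul_pow_sub_mem_padicIdeal (x := (l : ℚ)⁻¹ * N)
      (y := -l * ((N - l : ℕ) : ℚ)⁻¹) (mul_mem_padicIdeal hu (natCast_mem_padicIdeal_one hN))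
      (mul_mem (neg_mem (natCast_mem _ l)) hv)
      (by push_cast [hlN.le] at hl0' ⊢; field_simp; ring) r
    convert mul_mem_padicIdeal (neg_mem (pow_mem hu r)) hseries using 1
    have hcancel : (l : ℚ)⁻¹ ^ r * (l : ℚ) ^ r = 1 := by
      rw [← mul_pow, inv_mul_cancel₀ hl0, one_pow]
    rw [mul_pow, hr.neg_pow]
    linear_combination -2 * ((N - l : ℕ) : ℚ)⁻¹ ^ r * hcancel
  convert sum_mem hpair using 1
  simp only [harmonicSum, sum_add_distrib, ← mul_sum,
    sum_nonMultiples_reflect hN fun l ↦ (l : ℚ)⁻¹ ^ r]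
  ring

theorem harmonicSum_mem_padicIdeal_one (hp2 : ¬ p ∣ 2) (hN : p ∣ N) (hr : Odd r) :
    harmonicSum p N r ∈ padicIdeal p 1 := by
  refine mem_padicIdeal_of_natCast_mul_mem hp2 (mem_padicIdeal_of_natCast_mul_mem hp2 ?_)
  have hcorr : 2 * r * harmonicSum p N (r + 1) + r * (r + 1) * N * harmonicSum p N (r + 2)
      ∈ pIntegers p := by
    exact_mod_cast add_mem (mul_mem (natCast_mem _ (2 * r)) harmonicSum_mem_pIntegers)
      (mul_mem (natCast_mem _ (r * (r + 1) * N)) harmonicSum_mem_pIntegers)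
  convert sub_mem (padicIdeal_antitone (by omega) (reflection_mem_padicIdeal_three hN hr))
    (mul_mem_padicIdeal hcorr (natCast_mem_padicIdeal_one hN)) using 1
  push_cast
  ring

theorem harmonicSum_add_mem_padicIdeal_three (hN : p ∣ N) (hr : r + 3 ≤ p) (hodd : Odd r) :
    harmonicSum p N r + N ^ 2 * r * (r + 1) / (2 * (r + 2)) * bernoulli (p - r - 2)
      ∈ padicIdeal p 3 := by
  have hpodd : Odd p := (Fact.out : p.Prime).odd_of_ne_two (by omega)
  have hp2 : ¬ p ∣ 2 := Nat.not_dvd_of_pos_of_lt two_pos (by omega)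
  have hr4 : r + 1 + 3 ≤ p := by grind
  have hNp := natCast_mem_padicIdeal_one hN
  refine mem_padicIdeal_of_natCast_mul_mem hp2 (mem_padicIdeal_of_natCast_mul_mem hp2 ?_)
  have hnext := mul_mem_padicIdeal (natCast_mem _ (2 * r)) <|
    mul_mem_padicIdeal_add hNp (harmonicSum_sub_mem_padicIdeal_two hN (by omega) hr4)
  have hnext₂ := mul_mem_padicIdeal (natCast_mem _ (r * (r + 1))) <|
    mul_mem_padicIdeal_add (pow_mem_padicIdeal hNp 2)
      (harmonicSum_mem_padicIdeal_one hp2 hN (r := r + 2) (by grind))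
  convert sub_mem (sub_mem (reflection_mem_padicIdeal_three hN hodd) hnext) hnext₂ using 1
  have hr2 : (r : ℚ) + 2 ≠ 0 := by positivity
  rw [show p - (r + 1) - 1 = p - r - 2 by omega]
  push_cast
  rw [show (r : ℚ) + 1 + 1 = r + 2 by ring]
  field_simp
  ring

theorem harmonicSum_mem_padicIdeal (hN : p ∣ N) (hr0 : 1 ≤ r) (hr : r + 3 ≤ p) :
    harmonicSum p N r ∈ padicIdeal p (1 + r % 2) := by
  have hNp := natCast_mem_padicIdeal_one hN
  rcases r.even_or_odd with heven | hodd
  · have hinv : ((r + 1 : ℕ) : ℚ)⁻¹ ∈ pIntegers p :=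
      inv_natCast_mem_pIntegers (Nat.not_dvd_of_pos_of_lt r.succ_pos (by omega))
    have hmain := mul_mem_padicIdeal (mul_mem (mul_mem (natCast_mem _ r) hinv)
      (bernoulli_mem_pIntegers_of_lt (n := p - r - 1) (by omega))) hNp
    rw [Nat.even_iff.1 heven, add_zero]
    convert add_mem (padicIdeal_antitone one_le_two
      (harmonicSum_sub_mem_padicIdeal_two hN hr0 hr)) hmain using 1
    push_cast
    ring
  · have hinv : ((2 * (r + 2) : ℕ) : ℚ)⁻¹ ∈ pIntegers p := by
      refine inv_natCast_mem_pIntegers ((Fact.out : p.Prime).not_dvd_mul ?_ ?_) <;>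
        exact Nat.not_dvd_of_pos_of_lt (by omega) (by omega)
    have hmain := mul_mem_padicIdeal (mul_mem (mul_mem (natCast_mem _ (r * (r + 1))) hinv)
      (bernoulli_mem_pIntegers_of_lt (n := p - r - 2) (by omega))) (pow_mem_padicIdeal hNp 2)
    rw [Nat.odd_iff.1 hodd]
    convert sub_mem (padicIdeal_antitone (by omega : 2 ≤ 3)
      (harmonicSum_add_mem_padicIdeal_three hN hr hodd)) hmain using 1
    push_cast
    ring

end HarmonicSum

section AugmentedMonomial

variable {ι R : Type*} [Fintype ι] [CommRing R]

/-- The augmented monomial symmetric function `m̃_α` evaluated at `w`: the sum of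
`w(x₁)^α₁ ⋯ w(xₙ)^αₙ` over the `n`-tuples of distinct indices `xᵢ`. -/
noncomputable def augmentedMonomial (w : ι → R) {n : ℕ} (α : Fin n → ℕ) : R :=
  ∑ x : Fin n ↪ ι, ∏ i, w (x i) ^ α i

theorem augmentedMonomial_fin_zero (w : ι → R) (α : Fin 0 → ℕ) : augmentedMonomial w α = 1 := by
  simp [augmentedMonomial]

/-- The new index is either distinct from the old ones or equal to exactly one of them. -/
theorem augmentedMonomial_mul_sum_pow (w : ι → R) {n : ℕ} (a : ℕ) (α : Fin n → ℕ) :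
    augmentedMonomial w α * ∑ y, w y ^ a
      = augmentedMonomial w (Fin.cons a α : Fin (n + 1) → ℕ)
        + ∑ j, augmentedMonomial w (α + Pi.single j a) := by
  classical
  have hnew : augmentedMonomial w (Fin.cons a α : Fin (n + 1) → ℕ)
      = ∑ x : Fin n ↪ ι, (∏ i, w (x i) ^ α i) * ∑ y : {y // y ∉ Set.range x}, w y ^ a := by
    simp only [augmentedMonomial, mul_sum, ← Fintype.sum_sigma']
    refine Fintype.sum_equiv (Equiv.embeddingFinSucc n ι) _ _ fun x ↦ ?_
    rw [Fin.prod_univ_succ, mul_comm]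
    rfl
  have hold : ∑ j, augmentedMonomial w (α + Pi.single j a)
      = ∑ x : Fin n ↪ ι, (∏ i, w (x i) ^ α i) * ∑ y : {y // y ∈ Set.range x}, w y ^ a := by
    simp only [augmentedMonomial]
    rw [sum_comm]
    refine sum_congr rfl fun x _ ↦ ?_
    rw [← (Equiv.ofInjective x x.injective).sum_comp, mul_sum]
    refine sum_congr rfl fun j _ ↦ ?_
    simp only [Pi.add_apply, pow_add, prod_mul_distrib]
    congr 1
    rw [Fintype.prod_eq_single j fun i hi ↦ by simp [hi], Pi.single_eq_same,
      Equiv.ofInjective_apply]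
  rw [hnew, hold, augmentedMonomial, sum_mul, add_comm, ← sum_add_distrib]
  simp only [← mul_add]
  refine sum_congr rfl fun x _ ↦ ?_
  congr 1
  convert (Fintype.sum_subtype_add_sum_subtype (· ∈ Set.range x) fun y ↦ w y ^ a).symm

end AugmentedMonomial

section MainCongruence

variable {p : ℕ} [Fact p.Prime]

/-- In the recursion for `augmentedMonomial` the product term vanishes to the required order, since
an odd sum of two exponents has an odd summand. -/
theorem augmentedMonomial_sub_mem_padicIdeal {ι : Type*} [Fintype ι] {w : ι → ℚ} {d : ℕ}
    (hw : ∀ s, 1 ≤ s → s ≤ d → ∑ x, w x ^ s ∈ padicIdeal p (1 + s % 2)) {n : ℕ}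
    (α : Fin (n + 1) → ℕ) (hα : ∀ i, 1 ≤ α i) (hd : ∑ i, α i ≤ d) :
    augmentedMonomial w α - (-1) ^ n * n.factorial * ∑ x, w x ^ ∑ i, α i
      ∈ padicIdeal p (2 + (∑ i, α i) % 2) := by
  induction n with
  | zero =>
    have h := augmentedMonomial_mul_sum_pow w (α 0) (Fin.tail α)
    rw [augmentedMonomial_fin_zero, Fin.cons_self_tail, Fin.sum_univ_zero, add_zero, one_mul] at h
    simp [← h]
  | succ n ih =>
    induction α using Fin.consCases with
    | cons a β =>
    simp only [Fin.forall_fin_succ (n := n + 1), Fin.cons_zero, Fin.cons_succ] at hα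
    obtain ⟨ha, hβ⟩ := hα
    simp only [Fin.sum_cons] at hd ⊢
    have hβ1 : 1 ≤ ∑ i, β i := (hβ 0).trans (single_le_sum_of_canonicallyOrdered (mem_univ 0))
    have hconst : ((-1) ^ n * n.factorial : ℚ) ∈ pIntegers p :=
      mul_mem (pow_mem (neg_mem (one_mem _)) n) (natCast_mem _ _)
    have hβmem : augmentedMonomial w β ∈ padicIdeal p (1 + (∑ i, β i) % 2) := by
      simpa using add_mem (padicIdeal_antitone (by omega) (ih β hβ (by omega)))
        (mul_mem_padicIdeal hconst (hw _ hβ1 (by omega)))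
    have hproduct := padicIdeal_antitone (by omega : 2 + (a + ∑ i, β i) % 2 ≤ _)
      (mul_mem_padicIdeal_add hβmem (hw a ha (by omega)))
    have hmerge : ∀ j, augmentedMonomial w (β + Pi.single j a)
        - (-1) ^ n * n.factorial * ∑ x, w x ^ (a + ∑ i, β i)
        ∈ padicIdeal p (2 + (a + ∑ i, β i) % 2) := fun j ↦ by
      have hsum : ∑ i, (β + Pi.single j a : Fin (n + 1) → ℕ) i = a + ∑ i, β i := by
        simp [sum_add_distrib, add_comm]
      have h := ih (β + Pi.single j a) (fun i ↦ (hβ i).trans (Nat.le_add_right _ _))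
        (hsum.trans_le hd)
      rwa [hsum] at h
    convert sub_mem hproduct (sum_mem fun j (_ : j ∈ univ) ↦ hmerge j) using 1
    rw [augmentedMonomial_mul_sum_pow, sum_sub_distrib, sum_const, card_univ, Fintype.card_fin,
      nsmul_eq_mul, Nat.factorial_succ]
    push_cast
    ring

omit [Fact p.Prime] in
theorem U_eq_augmentedMonomial (b : ℕ) {n : ℕ} (α : Fin n → ℕ) :
    U p b α = augmentedMonomial (fun l : nonMultiples p (b * p) ↦ ((l : ℕ) : ℚ)⁻¹) α := by
  symm
  refine sum_bij (fun x _ i ↦ (x i : ℕ)) (fun x _ ↦ ?_) (fun x _ y _ h ↦ ?_) (fun l hl ↦ ?_)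
    fun x _ ↦ by simp
  · have hx i := mem_nonMultiples.1 (x i).2
    simp only [mem_filter, Fintype.mem_piFinset, mem_Ico]
    exact ⟨fun i ↦ ⟨Nat.one_le_iff_ne_zero.2 fun h ↦ (hx i).2 (h ▸ dvd_zero p), (hx i).1⟩,
      Subtype.val_injective.comp x.injective, fun i ↦ (hx i).2⟩
  · ext i
    exact congrFun h i
  · simp only [mem_filter, Fintype.mem_piFinset, mem_Ico] at hl
    obtain ⟨hlt, hinj, hpl⟩ := hl
    exact ⟨⟨fun i ↦ ⟨l i, mem_nonMultiples.2 ⟨(hlt i).2, hpl i⟩⟩,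
      fun i j h ↦ hinj (congrArg Subtype.val h)⟩, mem_univ _, rfl⟩

theorem U_sub_mul_harmonicSum_mem (b : ℕ) {n : ℕ} (α : Fin (n + 1) → ℕ) (hα : ∀ i, 1 ≤ α i)
    (hαp : ∑ i, α i + 3 ≤ p) :
    U p b α - (-1) ^ n * n.factorial * harmonicSum p (b * p) (∑ i, α i)
      ∈ padicIdeal p (2 + (∑ i, α i) % 2) := by
  have hsum (s : ℕ) : ∑ l : nonMultiples p (b * p), ((l : ℕ) : ℚ)⁻¹ ^ s
      = harmonicSum p (b * p) s := sum_coe_sort _ fun l : ℕ ↦ (l : ℚ)⁻¹ ^ s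
  rw [U_eq_augmentedMonomial, ← hsum]
  refine augmentedMonomial_sub_mem_padicIdeal (d := p - 3) (fun s hs0 hs ↦ ?_) α hα (by omega)
  rw [hsum]
  exact harmonicSum_mem_padicIdeal (Dvd.intro_left b rfl) hs0 (by omega)

end MainCongruence

theorem stmt_4 (p b n r : ℕ) (hp : p.Prime) (hn : 1 ≤ n) (hb : 1 ≤ b)
    (α : Fin n → ℕ) (hα : ∀ i, 1 ≤ α i) (hr : r = ∑ i, α i) (hrp : r ≤ p - 3) :
    (Odd r → ratCong p 3 (U p b α)
      ((-1) ^ n * (Nat.factorial (n - 1) : ℚ) *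
        ((b : ℚ) ^ 2 * r * (r + 1) / (2 * (r + 2))) * bernoulli (p - r - 2) * p ^ 2)) ∧
    (Even r → ratCong p 2 (U p b α)
      ((-1) ^ (n - 1) * (Nat.factorial (n - 1) : ℚ) *
        ((b : ℚ) * r / (r + 1)) * bernoulli (p - r - 1) * p)) := by
  have := Fact.mk hp
  obtain ⟨k, rfl⟩ := Nat.exists_eq_add_of_le' hn
  have hr0 : 1 ≤ r := hr ▸ (hα 0).trans (single_le_sum_of_canonicallyOrdered (mem_univ 0))
  have hp3 : r + 3 ≤ p := by omega
  have hdvd : p ∣ b * p := Dvd.intro_left b rfl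
  have hconst : ((-1) ^ k * k.factorial : ℚ) ∈ pIntegers p :=
    mul_mem (pow_mem (neg_mem (one_mem _)) k) (natCast_mem _ _)
  have hU := U_sub_mul_harmonicSum_mem b α hα (hr ▸ hp3)
  rw [← hr] at hU
  simp only [ratCong_iff_sub_mem_padicIdeal, Nat.add_sub_cancel]
  constructor
  · intro hodd
    rw [Nat.odd_iff.1 hodd] at hU
    convert add_mem hU (mul_mem_padicIdeal hconst
      (harmonicSum_add_mem_padicIdeal_three hdvd hp3 hodd)) using 1
    push_cast
    ring
  · intro heven
    rw [Nat.even_iff.1 heven] at hU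
    convert add_mem hU (mul_mem_padicIdeal hconst
      (harmonicSum_sub_mem_padicIdeal_two hdvd hr0 hp3)) using 1
    push_cast
    ring
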